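/- Let d ≥ 1, t ≠ 0 and 0 < ρ < ∞. For Schwartz functions u₁, u₂ on ℝ^d set v_j = M_t U(−t) u_j, where U(τ)f = F^{−1}(e^{−4π² i τ |ξ|²} Ff), M_t w(x) = e^{i|x|²/(4t)} w(x), and let Ω = v₁ ∗ (R v̄₂) with R w(x) = w(−x) and v̄₂ the complex conjugate of v₂. Then ‖F(M_t U(−t) u)‖_{L^{2ρ}(ℝ^d)} = (4π|t|)^{(1 − 1/ρ)d/2} ‖u‖_{L^{2ρ}(ℝ^d)} for every Schwartz u, and consequently ‖F Ω‖_{L^{ρ}(ℝ^d)} ≤ (4π|t|)^{d(1 − 1/ρ)} ‖u₁‖_{L^{2ρ}(ℝ^d)} ‖u₂‖_{L^{2ρ}(ℝ^d)}. -/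

import Mathlib

open MeasureTheory Real FourierTransform RealInnerProductSpace
open scoped ENNReal

/-- The free Schrödinger propagator `U(τ)f = 𝓕⁻¹(e^{-4π²iτ|ξ|²} 𝓕f)`,
written as an explicit Fourier integral. -/
noncomputable def schrodingerProp (d : ℕ) (τ : ℝ) (f : EuclideanSpace ℝ (Fin d) → ℂ) :
    EuclideanSpace ℝ (Fin d) → ℂ :=
  fun x => ∫ ξ : EuclideanSpace ℝ (Fin d),
    Complex.exp (-(4 * (π : ℂ) ^ 2 * (τ : ℂ) * (‖ξ‖ : ℂ) ^ 2) * Complex.I) *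
      𝓕 f ξ * Complex.exp (2 * (π : ℂ) * Complex.I * (⟪x, ξ⟫ : ℝ))

/-- The multiplication operator `M_t w(x) = e^{i|x|²/(4t)} w(x)`. -/
noncomputable def Mt (d : ℕ) (t : ℝ) (w : EuclideanSpace ℝ (Fin d) → ℂ) :
    EuclideanSpace ℝ (Fin d) → ℂ :=
  fun x => Complex.exp (Complex.I * (‖x‖ : ℂ) ^ 2 / (4 * (t : ℂ))) * w x

/-- Convolution of two complex functions on `ℝ^d`. -/
noncomputable def convC {d : ℕ} (f g : EuclideanSpace ℝ (Fin d) → ℂ) :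
    EuclideanSpace ℝ (Fin d) → ℂ :=
  fun x => ∫ y, f y * g (x - y)

/-!
The Schrödinger kernel makes `M_t U(-t)` factor as a constant of modulus `(4π|t|)^{-d/2}` times
`M_{-t}`, followed by the inverse Fourier transform and the dilation by `4πt`. Taking the Fourier
transform undoes the middle step, so `|𝓕(M_t U(-t) u)(ξ)| = (4π|t|)^{d/2} |u(4πt ξ)|`, and the norm
identity is a change of variables. Since `𝓕Ω = 𝓕v₁ · conj (𝓕v₂)`, the bound on `𝓕Ω` is Hölder's
inequality.
-/

open scoped ComplexConjugate SchwartzMap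

section GaussianMultiplier

variable {V E : Type*} [NormedAddCommGroup V] [InnerProductSpace ℝ V] [FiniteDimensional ℝ V]
  [MeasurableSpace V] [BorelSpace V] [NormedAddCommGroup E] [NormedSpace ℂ E]

lemma continuousOn_integral_cexp_smul {X α : Type*} [TopologicalSpace X]
    [FirstCountableTopology X] [MeasurableSpace α] {μ : Measure α} {φ : X → α → ℂ} {s : Set X}
    {g : α → E} (hφ_meas : ∀ b ∈ s, AEStronglyMeasurable (φ b) μ)
    (hφ_cont : ∀ a, ContinuousOn (φ · a) s) (hφ_re : ∀ b ∈ s, ∀ a, (φ b a).re ≤ 0)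
    (hg : Integrable g μ) :
    ContinuousOn (fun b ↦ ∫ a, Complex.exp (φ b a) • g a ∂μ) s := by
  refine continuousOn_of_dominated (bound := fun a ↦ ‖g a‖) (fun b hb ↦ ?_) (fun b hb ↦ ?_)
    hg.norm (ae_of_all _ fun a ↦ (hφ_cont a).cexp.smul continuousOn_const)
  · exact (Complex.continuous_exp.comp_aestronglyMeasurable (hφ_meas b hb)).smul hg.1
  · refine ae_of_all _ fun a ↦ ?_
    rw [norm_smul, Complex.norm_exp]
    exact mul_le_of_le_one_left (norm_nonneg _) (Real.exp_le_one_iff.2 (hφ_re b hb a))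

lemma integral_gaussian_smul_fourier_of_re_pos [CompleteSpace E] {b : ℂ} (hb : 0 < b.re)
    {f : V → E} (hf : Integrable f) (x : V) :
    ∫ ξ, Complex.exp (-b * ‖ξ‖ ^ 2 + 2 * π * Complex.I * ⟪x, ξ⟫) • 𝓕 f ξ =
      (π / b) ^ (Module.finrank ℝ V / 2 : ℂ) •
        ∫ y, Complex.exp (-π ^ 2 * ‖x - y‖ ^ 2 / b) • f y := by
  have gaussian_integrable :=
    GaussianFourier.integrable_cexp_neg_mul_sq_norm_add hb (2 * π * Complex.I) x
  have self_adjoint := VectorFourier.integral_fourierIntegral_smul_eq_flip (L := innerₗ V)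
    Real.continuous_fourierChar continuous_inner gaussian_integrable hf
  rw [flip_innerₗ] at self_adjoint
  refine self_adjoint.symm.trans ?_
  rw [← integral_smul]
  congr 1 with y
  rw [smul_smul, ← fourier_gaussian_innerProductSpace' hb]
  rfl

lemma re_div_nonpos_of_re_nonneg {b : ℂ} (hb : 0 ≤ b.re) {r : ℝ} (hr : r ≤ 0) :
    ((r : ℂ) / b).re ≤ 0 := by
  rw [div_eq_mul_inv, Complex.re_ofReal_mul, Complex.inv_re]
  exact mul_nonpos_of_nonpos_of_nonneg hr (div_nonneg hb (Complex.normSq_nonneg b))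

lemma ofReal_div_mem_slitPlane {r : ℝ} (hr : 0 < r) {b : ℂ} (hb : 0 ≤ b.re) (hb₀ : b ≠ 0) :
    (r : ℂ) / b ∈ Complex.slitPlane := by
  have hnormSq : 0 < Complex.normSq b := Complex.normSq_pos.2 hb₀
  rw [Complex.mem_slitPlane_iff, div_eq_mul_inv, Complex.re_ofReal_mul, Complex.im_ofReal_mul,
    Complex.inv_re, Complex.inv_im]
  rcases hb.lt_or_eq with hre | hre
  · exact .inl (mul_pos hr (div_pos hre hnormSq))
  · have him : b.im ≠ 0 := fun him ↦ hb₀ (Complex.ext hre.symm him)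
    exact .inr (mul_ne_zero hr.ne' (div_ne_zero (neg_ne_zero.2 him) hnormSq.ne'))

theorem integral_gaussian_smul_fourier [CompleteSpace E] {b : ℂ} (hb : 0 ≤ b.re) (hb₀ : b ≠ 0)
    {f : V → E} (hf : Integrable f) (hFf : Integrable (𝓕 f)) (x : V) :
    ∫ ξ, Complex.exp (-b * ‖ξ‖ ^ 2 + 2 * π * Complex.I * ⟪x, ξ⟫) • 𝓕 f ξ =
      (π / b) ^ (Module.finrank ℝ V / 2 : ℂ) •
        ∫ y, Complex.exp (-π ^ 2 * ‖x - y‖ ^ 2 / b) • f y := by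
  -- Both sides are continuous in `b` up to the boundary of the half-plane, except at `b = 0`.
  let S : Set ℂ := {b | 0 ≤ b.re ∧ b ≠ 0}
  have lhs_cont : ContinuousOn (fun b : ℂ ↦
      ∫ ξ, Complex.exp (-b * ‖ξ‖ ^ 2 + 2 * π * Complex.I * ⟪x, ξ⟫) • 𝓕 f ξ) S := by
    refine continuousOn_integral_cexp_smul (fun b _ ↦ ?_) (fun ξ ↦ by fun_prop)
      (fun b hb ξ ↦ ?_) hFf
    · exact Continuous.aestronglyMeasurable (by fun_prop)
    · simpa [← Complex.ofReal_pow] using mul_nonneg hb.1 (sq_nonneg ‖ξ‖)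
  have rhs_cont : ContinuousOn (fun b : ℂ ↦ ((π : ℂ) / b) ^ (Module.finrank ℝ V / 2 : ℂ) •
      ∫ y, Complex.exp (-π ^ 2 * ‖x - y‖ ^ 2 / b) • f y) S := by
    refine ContinuousOn.smul (ContinuousOn.cpow_const ?_ ?_)
      (continuousOn_integral_cexp_smul (fun b _ ↦ ?_) (fun y ↦ ?_) (fun b hb y ↦ ?_) hf)
    · exact continuousOn_const.div continuousOn_id fun b hb ↦ hb.2
    · exact fun b hb ↦ ofReal_div_mem_slitPlane pi_pos hb.1 hb.2
    · exact Continuous.aestronglyMeasurable (by fun_prop)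
    · exact continuousOn_const.div continuousOn_id fun b hb ↦ hb.2
    · have hr : -π ^ 2 * ‖x - y‖ ^ 2 ≤ 0 := by
        rw [neg_mul]
        exact neg_nonpos.2 (by positivity)
      simpa using re_div_nonpos_of_re_nonneg hb.1 hr
  have half_plane_sub : {b : ℂ | 0 < b.re} ⊆ S :=
    fun b (hb : 0 < b.re) ↦ ⟨hb.le, ne_of_apply_ne Complex.re hb.ne'⟩
  have dense : S ⊆ closure {b : ℂ | 0 < b.re} := by
    rw [Complex.closure_setOfPred_lt_re]
    exact fun b hb ↦ hb.1
  exact Set.EqOn.of_subset_closure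
    (fun b hb ↦ integral_gaussian_smul_fourier_of_re_pos hb hf x)
    lhs_cont rhs_cont half_plane_sub dense ⟨hb, hb₀⟩

end GaussianMultiplier

section FourierTransform

variable {V E : Type*} [NormedAddCommGroup V] [InnerProductSpace ℝ V] [FiniteDimensional ℝ V]
  [MeasurableSpace V] [BorelSpace V] [NormedAddCommGroup E] [NormedSpace ℂ E]

lemma continuous_fourier_of_integrable {f : V → E} (hf : Integrable f) : Continuous (𝓕 f) :=
  VectorFourier.fourierIntegral_continuous Real.continuous_fourierChar
    (innerSL ℝ).continuous₂ hf

lemma fourier_comp_inv_smul {a : ℝ} (ha : a ≠ 0) (f : V → E) (ξ : V) :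
    𝓕 (fun x ↦ f (a⁻¹ • x)) ξ = |a| ^ Module.finrank ℝ V • 𝓕 f (a • ξ) := by
  rw [Real.fourier_eq, Real.fourier_eq, ← abs_pow,
    ← Measure.integral_comp_inv_smul volume (fun y ↦ fourierChar (-⟪y, a • ξ⟫) • f y) a]
  simp only [inner_smul_left, inner_smul_right, RCLike.conj_to_real, mul_inv_cancel_left₀ ha]

lemma fourier_conjneg (f : V → ℂ) : 𝓕 (conjneg f) = conj (𝓕 f) := by
  ext ξ
  rw [Pi.conj_apply, Real.fourier_eq', Real.fourier_eq', ← integral_conj,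
    ← integral_neg_eq_self]
  congr 1 with x
  simp [← Complex.exp_conj, map_ofNat]

lemma integrable_conjneg {f : V → ℂ} (hf : Integrable f) : Integrable (conjneg f) :=
  (LinearIsometryEquiv.integrable_comp_iff Complex.conjLIE).2 hf.comp_neg

end FourierTransform

lemma eLpNorm_comp_const_smul {V E : Type*} [NormedAddCommGroup V] [NormedSpace ℝ V]
    [FiniteDimensional ℝ V] [MeasurableSpace V] [BorelSpace V] [NormedAddCommGroup E]
    (μ : Measure V) [μ.IsAddHaarMeasure] {a : ℝ} (ha : a ≠ 0) (f : V → E) (p : ℝ≥0∞) :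
    eLpNorm (fun x ↦ f (a • x)) p μ =
      ENNReal.ofReal (|a| ^ (-(Module.finrank ℝ V * p⁻¹.toReal))) * eLpNorm f p μ := by
  have ha_pos : 0 < |a| := abs_pos.2 ha
  have hjac : |(a ^ Module.finrank ℝ V)⁻¹| = |a| ^ (-(Module.finrank ℝ V : ℝ)) := by
    rw [abs_inv, abs_pow, rpow_neg ha_pos.le, rpow_natCast]
  have hpos : 0 < |a| ^ (-(Module.finrank ℝ V : ℝ)) := by positivity
  calc eLpNorm (fun x ↦ f (a • x)) p μ
    _ = eLpNorm f p (μ.map (a • ·)) :=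
      ((Homeomorph.smulOfNeZero a ha).measurableEmbedding.eLpNorm_map_measure).symm
    _ = ENNReal.ofReal (|a| ^ (-(Module.finrank ℝ V : ℝ))) ^ p⁻¹.toReal * eLpNorm f p μ := by
      rw [Measure.map_addHaar_smul μ ha, hjac,
        eLpNorm_smul_measure_of_ne_zero (by simpa using hpos), one_div, smul_eq_mul]
    _ = _ := by
      rw [ENNReal.ofReal_rpow_of_pos hpos, ← rpow_mul ha_pos.le, neg_mul]

section Correlation

variable {d : ℕ} {f g : EuclideanSpace ℝ (Fin d) → ℂ}

lemma fourier_convC (hf : Integrable f) (hg : Integrable g) : 𝓕 (convC f g) = 𝓕 f * 𝓕 g :=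
  funext (Real.fourier_mul_convolution_eq hf hg)

lemma eLpNorm_fourier_convC_conjneg_le (hf : Integrable f) (hg : Integrable g) {p q r : ℝ≥0∞}
    [ENNReal.HolderTriple p q r] :
    eLpNorm (𝓕 (convC f (conjneg g))) r volume ≤
      eLpNorm (𝓕 f) p volume * eLpNorm (𝓕 g) q volume := by
  rw [fourier_convC hf (integrable_conjneg hg), fourier_conjneg]
  refine (eLpNorm_le_eLpNorm_mul_eLpNorm'_of_norm (p := p) (q := q) (r := r)
    (continuous_fourier_of_integrable hf).aestronglyMeasurable
    (continuous_fourier_of_integrable hg).aestronglyMeasurable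
    (fun z w ↦ z * conj w) 1 (ae_of_all _ fun ξ ↦ by simp)).trans_eq ?_
  rw [ENNReal.coe_one, one_mul]

end Correlation

section QuadraticPhase

lemma iteratedDeriv_cexp_ofReal_mul (n : ℕ) (c : ℂ) :
    iteratedDeriv n (fun s : ℝ ↦ Complex.exp (s * c)) =
      fun s : ℝ ↦ c ^ n * Complex.exp (s * c) := by
  induction n with
  | zero => simp
  | succ n ih =>
    ext s
    have hderiv : HasDerivAt (fun s : ℝ ↦ Complex.exp (s * c)) (Complex.exp (s * c) * (1 * c)) s :=
      (Complex.ofRealCLM.hasDerivAt.mul_const c).cexp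
    rw [iteratedDeriv_succ, ih, (hderiv.const_mul (c ^ n)).deriv]
    ring

lemma hasTemperateGrowth_cexp_ofReal_mul_I :
    (fun s : ℝ ↦ Complex.exp (s * Complex.I)).HasTemperateGrowth := by
  refine ⟨(Complex.ofRealCLM.contDiff.mul contDiff_const).cexp, fun n ↦ ⟨0, 1, fun s ↦ ?_⟩⟩
  rw [norm_iteratedFDeriv_eq_norm_iteratedDeriv, iteratedDeriv_cexp_ofReal_mul]
  simp [Complex.norm_exp_ofReal_mul_I]

variable {d : ℕ}

lemma Mt_apply_eq (t : ℝ) (w : EuclideanSpace ℝ (Fin d) → ℂ) (x : EuclideanSpace ℝ (Fin d)) :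
    Mt d t w x = Complex.exp ((1 / (4 * t) * ‖x‖ ^ 2 : ℝ) * Complex.I) * w x := by
  rw [Mt]
  congr 2
  push_cast
  ring

lemma norm_Mt_apply (t : ℝ) (w : EuclideanSpace ℝ (Fin d) → ℂ) (x : EuclideanSpace ℝ (Fin d)) :
    ‖Mt d t w x‖ = ‖w x‖ := by
  rw [Mt_apply_eq, norm_mul, Complex.norm_exp_ofReal_mul_I, one_mul]

lemma exists_schwartzMap_coe_eq_Mt (t : ℝ) (u : 𝓢(EuclideanSpace ℝ (Fin d), ℂ)) :
    ∃ w : 𝓢(EuclideanSpace ℝ (Fin d), ℂ), ⇑w = Mt d t u := by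
  have hphase : (fun x : EuclideanSpace ℝ (Fin d) ↦
      Complex.exp ((1 / (4 * t) * ‖x‖ ^ 2 : ℝ) * Complex.I)).HasTemperateGrowth :=
    hasTemperateGrowth_cexp_ofReal_mul_I.comp
      (f := fun x : EuclideanSpace ℝ (Fin d) ↦ 1 / (4 * t) * ‖x‖ ^ 2) (by fun_prop)
  refine ⟨SchwartzMap.smulLeftCLM ℂ (fun x ↦
    Complex.exp ((1 / (4 * t) * ‖x‖ ^ 2 : ℝ) * Complex.I)) u, funext fun x ↦ ?_⟩
  rw [SchwartzMap.smulLeftCLM_apply_apply hphase, Mt_apply_eq, smul_eq_mul]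

end QuadraticPhase

section TwistedPropagator

variable {d : ℕ} {t : ℝ}

lemma schrodingerProp_neg_apply (ht : t ≠ 0) {u : EuclideanSpace ℝ (Fin d) → ℂ}
    (hu : Integrable u) (hFu : Integrable (𝓕 u)) (x : EuclideanSpace ℝ (Fin d)) :
    schrodingerProp d (-t) u x =
      (Complex.I / (4 * π * t)) ^ (d / 2 : ℂ) *
        ∫ y, Complex.exp (-Complex.I * ‖x - y‖ ^ 2 / (4 * t)) * u y := by
  have hπ : (π : ℂ) ≠ 0 := Complex.ofReal_ne_zero.2 pi_ne_zero
  have ht' : (t : ℂ) ≠ 0 := Complex.ofReal_ne_zero.2 ht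
  let b : ℂ := -(4 * π ^ 2 * t) * Complex.I
  have hb : 0 ≤ b.re := by simp [b, ← Complex.ofReal_pow]
  have hb₀ : b ≠ 0 := by simp [b, ht]
  have hprefactor : π / b = Complex.I / (4 * π * t) := by
    simp only [b]
    field_simp
    simp
  have hkernel (y : EuclideanSpace ℝ (Fin d)) :
      -π ^ 2 * ‖x - y‖ ^ 2 / b = -Complex.I * ‖x - y‖ ^ 2 / (4 * t) := by
    simp only [b]
    field_simp
    simp
  have gaussian := integral_gaussian_smul_fourier hb hb₀ hu hFu x
  simp only [hprefactor, hkernel, finrank_euclideanSpace_fin, smul_eq_mul] at gaussian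
  rw [← gaussian, schrodingerProp]
  congr 1 with ξ
  rw [mul_right_comm, ← Complex.exp_add]
  congr 3
  simp only [b]
  push_cast
  ring

-- Expanding `‖x - y‖²` in the Schrödinger kernel, the outer factor `M_t` cancels the `‖x‖²` term,
-- the `‖y‖²` term is `M_{-t}`, and the cross term is an inverse Fourier transform.
theorem Mt_schrodingerProp_neg (ht : t ≠ 0) {u : EuclideanSpace ℝ (Fin d) → ℂ}
    (hu : Integrable u) (hFu : Integrable (𝓕 u)) :
    Mt d t (schrodingerProp d (-t) u) = fun x ↦
      (Complex.I / (4 * π * t)) ^ (d / 2 : ℂ) * 𝓕⁻ (Mt d (-t) u) ((4 * π * t)⁻¹ • x) := by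
  ext x
  rw [Mt, schrodingerProp_neg_apply ht hu hFu, Real.fourierInv_eq', mul_left_comm,
    ← integral_const_mul]
  congr 2 with y
  have hπ : (π : ℂ) ≠ 0 := Complex.ofReal_ne_zero.2 pi_ne_zero
  have ht' : (t : ℂ) ≠ 0 := Complex.ofReal_ne_zero.2 ht
  have hsq : (‖x - y‖ : ℂ) ^ 2 = (‖x‖ : ℂ) ^ 2 - 2 * (⟪y, x⟫ : ℝ) + (‖y‖ : ℂ) ^ 2 := by
    rw [real_inner_comm]
    exact_mod_cast norm_sub_sq_real x y
  rw [Mt, smul_eq_mul, ← mul_assoc, ← mul_assoc, ← Complex.exp_add, ← Complex.exp_add, hsq,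
    inner_smul_right]
  congr 2
  push_cast
  field_simp
  ring

lemma integrable_Mt_schrodingerProp_neg (ht : t ≠ 0) (u : 𝓢(EuclideanSpace ℝ (Fin d), ℂ)) :
    Integrable (Mt d t (schrodingerProp d (-t) u)) := by
  obtain ⟨w, hw⟩ := exists_schwartzMap_coe_eq_Mt (-t) u
  rw [Mt_schrodingerProp_neg ht u.integrable (𝓕 u).integrable, ← hw, ← SchwartzMap.fourierInv_coe]
  exact ((𝓕⁻ w).integrable.comp_smul (by simp [ht])).const_mul _

theorem fourier_Mt_schrodingerProp_neg (ht : t ≠ 0) (u : 𝓢(EuclideanSpace ℝ (Fin d), ℂ))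
    (ξ : EuclideanSpace ℝ (Fin d)) :
    𝓕 (Mt d t (schrodingerProp d (-t) u)) ξ =
      (Complex.I / (4 * π * t)) ^ (d / 2 : ℂ) *
        (|4 * π * t| ^ d • Mt d (-t) u ((4 * π * t) • ξ)) := by
  obtain ⟨w, hw⟩ := exists_schwartzMap_coe_eq_Mt (-t) u
  have inversion : 𝓕 (𝓕⁻ ⇑w) = w := by
    rw [← SchwartzMap.fourierInv_coe, ← SchwartzMap.fourier_coe,
      FourierTransform.fourier_fourierInv_eq]
  have scaling := fourier_comp_inv_smul (by simp [ht] : 4 * π * t ≠ 0) (𝓕⁻ ⇑w) ξ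
  rw [inversion, finrank_euclideanSpace_fin] at scaling
  rw [Mt_schrodingerProp_neg ht u.integrable (𝓕 u).integrable, ← hw, ← scaling]
  exact congrFun (VectorFourier.fourierIntegral_const_smul _ _ _ _ _) ξ

lemma norm_I_div_cpow (s : ℝ) (c : ℝ) :
    ‖(Complex.I / c) ^ (s : ℂ)‖ = |c| ^ (-s) := by
  rw [Complex.norm_cpow_real, norm_div, Complex.norm_I, Complex.norm_real, Real.norm_eq_abs,
    one_div, inv_rpow (abs_nonneg c), rpow_neg (abs_nonneg c)]

lemma norm_fourier_Mt_schrodingerProp_neg (ht : t ≠ 0) (u : 𝓢(EuclideanSpace ℝ (Fin d), ℂ))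
    (ξ : EuclideanSpace ℝ (Fin d)) :
    ‖𝓕 (Mt d t (schrodingerProp d (-t) u)) ξ‖ =
      |4 * π * t| ^ (d / 2 : ℝ) * ‖u ((4 * π * t) • ξ)‖ := by
  have ha : 0 < |4 * π * t| := abs_pos.2 (by simp [ht])
  have hprefactor : ‖(Complex.I / (4 * π * t)) ^ (d / 2 : ℂ)‖ = |4 * π * t| ^ (-(d / 2) : ℝ) := by
    simpa using norm_I_div_cpow (d / 2) (4 * π * t)
  rw [fourier_Mt_schrodingerProp_neg ht, norm_mul, norm_smul, norm_Mt_apply, hprefactor,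
    Real.norm_of_nonneg (by positivity), ← mul_assoc, ← rpow_natCast, ← rpow_add ha]
  congr 2
  ring

theorem eLpNorm_fourier_Mt_schrodingerProp_neg (ht : t ≠ 0) (p : ℝ≥0∞)
    (u : 𝓢(EuclideanSpace ℝ (Fin d), ℂ)) :
    eLpNorm (𝓕 (Mt d t (schrodingerProp d (-t) u))) p volume =
      ENNReal.ofReal ((4 * π * |t|) ^ (d * (1 / 2 - p⁻¹.toReal))) * eLpNorm u p volume := by
  have ha : 4 * π * t ≠ 0 := by simp [ht]
  have habs : |4 * π * t| = 4 * π * |t| := by simp [abs_mul, abs_of_pos pi_pos]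
  have hpos : 0 < 4 * π * |t| := by positivity
  calc eLpNorm (𝓕 (Mt d t (schrodingerProp d (-t) u))) p volume
    _ = eLpNorm ((4 * π * |t|) ^ (d / 2 : ℝ) • fun ξ ↦ u ((4 * π * t) • ξ)) p volume := by
      refine eLpNorm_congr_norm_ae (ae_of_all _ fun ξ ↦ ?_)
      rw [norm_fourier_Mt_schrodingerProp_neg ht, Pi.smul_apply, norm_smul,
        Real.norm_of_nonneg (by positivity), habs]
    _ = ENNReal.ofReal ((4 * π * |t|) ^ (d / 2 : ℝ)) *
          (ENNReal.ofReal ((4 * π * |t|) ^ (-(d * p⁻¹.toReal))) * eLpNorm u p volume) := by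
      rw [eLpNorm_const_smul, eLpNorm_comp_const_smul volume ha, habs,
        Real.enorm_of_nonneg (by positivity), finrank_euclideanSpace_fin]
    _ = _ := by
      rw [← mul_assoc, ← ENNReal.ofReal_mul (by positivity), ← rpow_add hpos]
      congr 3
      ring

end TwistedPropagator

theorem twisted_product_fourier_estimate_general {d : ℕ} {t : ℝ} (ht : t ≠ 0) {p q r : ℝ≥0∞}
    [hpqr : ENNReal.HolderTriple p q r] (hp : p ≠ 0) (hq : q ≠ 0)
    (u₁ u₂ : 𝓢(EuclideanSpace ℝ (Fin d), ℂ)) :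
    (∀ u : 𝓢(EuclideanSpace ℝ (Fin d), ℂ),
      eLpNorm (𝓕 (Mt d t (schrodingerProp d (-t) u))) p volume =
        ENNReal.ofReal ((4 * π * |t|) ^ (d * (1 / 2 - p⁻¹.toReal))) * eLpNorm u p volume) ∧
    eLpNorm (𝓕 (convC (Mt d t (schrodingerProp d (-t) u₁))
        (conjneg (Mt d t (schrodingerProp d (-t) u₂))))) r volume ≤
      ENNReal.ofReal ((4 * π * |t|) ^ (d * (1 - r⁻¹.toReal))) *
        eLpNorm u₁ p volume * eLpNorm u₂ q volume := by
  refine ⟨eLpNorm_fourier_Mt_schrodingerProp_neg ht p, ?_⟩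
  have hpos : 0 < 4 * π * |t| := by positivity
  have hr : r⁻¹.toReal = p⁻¹.toReal + q⁻¹.toReal := by
    rw [← hpqr.inv_add_inv_eq_inv,
      ENNReal.toReal_add (ENNReal.inv_ne_top.2 hp) (ENNReal.inv_ne_top.2 hq)]
  have hexponent : (d : ℝ) * (1 - r⁻¹.toReal) =
      d * (1 / 2 - p⁻¹.toReal) + d * (1 / 2 - q⁻¹.toReal) := by
    rw [hr]
    ring
  refine (eLpNorm_fourier_convC_conjneg_le (p := p) (q := q)
    (integrable_Mt_schrodingerProp_neg ht u₁) (integrable_Mt_schrodingerProp_neg ht u₂)).trans_eq ?_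
  rw [eLpNorm_fourier_Mt_schrodingerProp_neg ht, eLpNorm_fourier_Mt_schrodingerProp_neg ht,
    hexponent, rpow_add hpos, ENNReal.ofReal_mul (by positivity)]
  ring

lemma holderTriple_two_mul_self (p : ℝ≥0∞) : ENNReal.HolderTriple (2 * p) (2 * p) p where
  inv_add_inv_eq_inv := by
    rw [ENNReal.mul_inv (.inl two_ne_zero) (.inl ENNReal.ofNat_ne_top), ← add_mul,
      ENNReal.inv_two_add_inv_two, one_mul]

/-- For `t ≠ 0` and `0 < ρ < ∞`:
`‖𝓕(M_t U(-t)u)‖_{L^{2ρ}} = (4π|t|)^{(1-1/ρ)d/2} ‖u‖_{L^{2ρ}}` for every Schwartz `u`,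
and consequently, with `v_j = M_t U(-t)u_j` and `Ω = v₁ ∗ (R v̄₂)`,
`‖𝓕Ω‖_{L^ρ} ≤ (4π|t|)^{d(1-1/ρ)} ‖u₁‖_{L^{2ρ}} ‖u₂‖_{L^{2ρ}}`. -/
theorem twisted_product_fourier_estimate (d : ℕ) (hd : 1 ≤ d) (t : ℝ) (ht : t ≠ 0)
    (ρ : ℝ) (hρ : 0 < ρ)
    (u₁ u₂ : SchwartzMap (EuclideanSpace ℝ (Fin d)) ℂ) :
    (∀ u : SchwartzMap (EuclideanSpace ℝ (Fin d)) ℂ,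
      eLpNorm (𝓕 (Mt d t (schrodingerProp d (-t) (⇑u)))) (ENNReal.ofReal (2 * ρ)) volume =
        ENNReal.ofReal ((4 * π * |t|) ^ ((1 - 1 / ρ) * (d : ℝ) / 2)) *
          eLpNorm (⇑u) (ENNReal.ofReal (2 * ρ)) volume) ∧
    eLpNorm
        (𝓕 (convC (Mt d t (schrodingerProp d (-t) (⇑u₁)))
          (fun x => (starRingEnd ℂ) (Mt d t (schrodingerProp d (-t) (⇑u₂)) (-x)))))
        (ENNReal.ofReal ρ) volume ≤
      ENNReal.ofReal ((4 * π * |t|) ^ ((d : ℝ) * (1 - 1 / ρ))) *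
        eLpNorm (⇑u₁) (ENNReal.ofReal (2 * ρ)) volume *
        eLpNorm (⇑u₂) (ENNReal.ofReal (2 * ρ)) volume := by
  have : ENNReal.HolderTriple (.ofReal (2 * ρ)) (.ofReal (2 * ρ)) (.ofReal ρ) := by
    simpa [ENNReal.ofReal_mul] using holderTriple_two_mul_self (.ofReal ρ)
  have hp : ENNReal.ofReal (2 * ρ) ≠ 0 := by simpa using hρ
  have toReal_inv_ofReal {x : ℝ} (hx : 0 < x) : (ENNReal.ofReal x)⁻¹.toReal = 1 / x := by
    rw [ENNReal.toReal_inv, ENNReal.toReal_ofReal hx.le, one_div]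
  have hexponent : (d : ℝ) * (1 / 2 - 1 / (2 * ρ)) = (1 - 1 / ρ) * d / 2 := by ring
  have estimate := twisted_product_fourier_estimate_general ht hp hp u₁ u₂
    (r := ENNReal.ofReal ρ)
  rw [toReal_inv_ofReal hρ, toReal_inv_ofReal (by positivity : 0 < 2 * ρ), hexponent] at estimate
  exact estimate
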